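/- Let ω ∈ L¹((−π,π); ℂ) and let z : (−π,π) → ℂ be measurable with sup_{α} |Im z(α)| < ∞. Then the periodic Birkhoff–Rott integral BR*(ζ) := (1/(4πi)) ∫_{−π}^{π} ω(α) cot((ζ − z(α))/2) dα satisfies: for every ε > 0 there is T > 0 such that |BR*(ζ) + (1/(4π)) ∫_{−π}^{π} ω(α) dα| ≤ ε whenever Im ζ ≥ T, and |BR*(ζ) − (1/(4π)) ∫_{−π}^{π} ω(α) dα| ≤ ε whenever Im ζ ≤ −T. That is, BR*(ζ) → ∓(1/(4π))∫ω as Im ζ → ±∞, uniformly in Re ζ. -/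

import Mathlib

/-!
Since `cot s = (e^{2is} + 1) / (i (1 - e^{2is}))` and `e^{2is} → 0` as `Im s → ∞`, the cotangent
tends to `-i` uniformly high in the upper half plane and, being odd, to `i` in the lower one. As
`Im z` is bounded, the kernel `cot ((ζ - z α) / 2)` tends to `∓i` uniformly in `α` as `Im ζ → ±∞`,
and integrating it against the integrable density `ω` preserves the limit.
-/

open Real Set Complex MeasureTheory Filter

/-- The periodic Birkhoff–Rott integral (complex conjugate form)
`BR*(ζ) = (1/(4πi)) ∫_{−π}^{π} ω(α) cot((ζ − z(α))/2) dα`. -/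
noncomputable def periodicBR (ω : ℝ → ℂ) (z : ℝ → ℂ) (ζ : ℂ) : ℂ :=
  (4 * Real.pi * Complex.I)⁻¹ *
    ∫ α in Ioo (-Real.pi) Real.pi, ω α * Complex.cot ((ζ - z α) / 2)

open scoped Topology

section Cotangent

theorem tendsto_cot_comap_im_atTop :
    Tendsto Complex.cot (comap Complex.im atTop) (𝓝 (-I)) := by
  have exp_tendsto_zero :
      Tendsto (fun s : ℂ => Complex.exp (2 * I * s)) (comap Complex.im atTop) (𝓝 0) := by
    rw [tendsto_exp_nhds_zero_iff]
    simpa using (tendsto_comap (f := Complex.im)).const_mul_atTop (two_pos (α := ℝ))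
  have ratio_tendsto := (exp_tendsto_zero.add_const 1).div
    ((exp_tendsto_zero.const_sub 1).const_mul I) (by simp)
  have ratio_at_zero : ((0 : ℂ) + 1) / (I * (1 - 0)) = -I := by simp
  rw [ratio_at_zero] at ratio_tendsto
  exact ratio_tendsto.congr fun s => (Complex.cot_eq_exp_ratio s).symm

theorem tendsto_cot_comap_im_atBot :
    Tendsto Complex.cot (comap Complex.im atBot) (𝓝 I) := by
  have neg_tendsto :
      Tendsto (fun s : ℂ => -s) (comap Complex.im atBot) (comap Complex.im atTop) :=
    tendsto_comap_iff.2 (tendsto_neg_atBot_atTop.comp tendsto_comap)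
  have cot_odd (s : ℂ) : -Complex.cot (-s) = Complex.cot s := by
    simp [Complex.cot, div_neg]
  simpa [cot_odd] using (tendsto_cot_comap_im_atTop.comp neg_tendsto).neg

theorem measurable_cot : Measurable Complex.cot :=
  Complex.measurable_cos.div Complex.measurable_sin

end Cotangent

section UniformLimit

variable {X ι A : Type*} [MeasurableSpace X] {μ : Measure X}
  [NormedRing A] [NormedAlgebra ℝ A] {f : X → A} {c : A}

theorem norm_integral_mul_sub_integral_mul_const_le {g : X → A} {δ : ℝ}
    (hf : Integrable f μ) (hg : AEStronglyMeasurable g μ) (hgc : ∀ᵐ x ∂μ, ‖g x - c‖ ≤ δ) :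
    ‖(∫ x, f x * g x ∂μ) - (∫ x, f x ∂μ) * c‖ ≤ (∫ x, ‖f x‖ ∂μ) * δ := by
  have hdiff : ∀ᵐ x ∂μ, ‖f x * (g x - c)‖ ≤ ‖f x‖ * δ := by
    filter_upwards [hgc] with x hx
    exact (norm_mul_le _ _).trans (by gcongr)
  have hdiff_int : Integrable (fun x => f x * (g x - c)) μ :=
    (hf.norm.mul_const δ).mono'
      (hf.aestronglyMeasurable.mul (hg.sub aestronglyMeasurable_const)) hdiff
  have hfg_int : Integrable (fun x => f x * g x) μ := by
    simpa [mul_sub, Pi.add_def] using hdiff_int.add (hf.mul_const c)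
  calc ‖(∫ x, f x * g x ∂μ) - (∫ x, f x ∂μ) * c‖
      = ‖∫ x, f x * (g x - c) ∂μ‖ := by
        simp only [mul_sub]
        rw [integral_sub hfg_int (hf.mul_const c), integral_mul_const_of_integrable hf]
    _ ≤ ∫ x, ‖f x‖ * δ ∂μ := norm_integral_le_of_norm_le (hf.norm.mul_const δ) hdiff
    _ = (∫ x, ‖f x‖ ∂μ) * δ := integral_mul_const δ _

theorem tendsto_integral_mul_of_tendsto_prod_ae {g : ι → X → A} {l : Filter ι}
    (hf : Integrable f μ) (hg : ∀ᶠ i in l, AEStronglyMeasurable (g i) μ)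
    (hlim : Tendsto (fun p : ι × X => g p.1 p.2) (l ×ˢ ae μ) (𝓝 c)) :
    Tendsto (fun i => ∫ x, f x * g i x ∂μ) l (𝓝 ((∫ x, f x ∂μ) * c)) := by
  rw [Metric.tendsto_nhds]
  intro ε hε
  obtain ⟨δ, hδ, hδε⟩ := exists_pos_mul_lt hε (∫ x, ‖f x‖ ∂μ)
  have hclose : ∀ᶠ i in l, ∀ᵐ x ∂μ, dist (g i x) c < δ :=
    (hlim.eventually (Metric.ball_mem_nhds c hδ)).curry
  filter_upwards [hg, hclose] with i hgi hi
  rw [dist_eq_norm]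
  refine (norm_integral_mul_sub_integral_mul_const_le hf hgi ?_).trans_lt hδε
  exact hi.mono fun x hx => (dist_eq_norm (g i x) c ▸ hx).le

end UniformLimit

section PeriodicKernel

variable {X : Type*} [MeasurableSpace X] {μ : Measure X} {ω z : X → ℂ} {B : ℝ}

theorem tendsto_half_sub_comap_im_atTop (hzIm : ∀ᵐ x ∂μ, |(z x).im| ≤ B) :
    Tendsto (fun p : ℂ × X => (p.1 - z p.2) / 2) (comap Complex.im atTop ×ˢ ae μ)
      (comap Complex.im atTop) := by
  have hsub : Tendsto (fun p : ℂ × X => p.1.im + -(z p.2).im)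
      (comap Complex.im atTop ×ˢ ae μ) atTop :=
    tendsto_atTop_add_right_of_le' _ (-B) (tendsto_comap.comp tendsto_fst)
      (tendsto_snd.eventually (hzIm.mono fun _ hx => neg_le_neg (abs_le.1 hx).2))
  rw [tendsto_comap_iff]
  simpa [Function.comp_def, sub_eq_add_neg] using hsub.atTop_div_const two_pos

theorem tendsto_half_sub_comap_im_atBot (hzIm : ∀ᵐ x ∂μ, |(z x).im| ≤ B) :
    Tendsto (fun p : ℂ × X => (p.1 - z p.2) / 2) (comap Complex.im atBot ×ˢ ae μ)
      (comap Complex.im atBot) := by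
  have hsub : Tendsto (fun p : ℂ × X => p.1.im + -(z p.2).im)
      (comap Complex.im atBot ×ˢ ae μ) atBot :=
    tendsto_atBot_add_right_of_ge' _ B (tendsto_comap.comp tendsto_fst)
      (tendsto_snd.eventually (hzIm.mono fun _ hx => neg_le.1 (abs_le.1 hx).1))
  rw [tendsto_comap_iff]
  simpa [Function.comp_def, sub_eq_add_neg] using hsub.atBot_div_const two_pos

theorem tendsto_integral_mul_cot {l : Filter ℂ} {c : ℂ}
    (hω : Integrable ω μ) (hz : AEMeasurable z μ)
    (hcot : Tendsto (fun p : ℂ × X => Complex.cot ((p.1 - z p.2) / 2)) (l ×ˢ ae μ) (𝓝 c)) :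
    Tendsto (fun ζ => ∫ x, ω x * Complex.cot ((ζ - z x) / 2) ∂μ) l (𝓝 ((∫ x, ω x ∂μ) * c)) :=
  tendsto_integral_mul_of_tendsto_prod_ae hω
    (.of_forall fun ζ => (measurable_cot.comp_aemeasurable
      ((hz.const_sub ζ).div_const 2)).aestronglyMeasurable) hcot

theorem periodicBR_limit_at_infinity_general
    (hω : Integrable ω μ) (hz : AEMeasurable z μ) (hzIm : ∀ᵐ x ∂μ, |(z x).im| ≤ B) :
    Tendsto (fun ζ => (4 * Real.pi * I)⁻¹ * ∫ x, ω x * Complex.cot ((ζ - z x) / 2) ∂μ)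
      (comap Complex.im atTop) (𝓝 (-((4 * Real.pi : ℂ)⁻¹ * ∫ x, ω x ∂μ))) ∧
    Tendsto (fun ζ => (4 * Real.pi * I)⁻¹ * ∫ x, ω x * Complex.cot ((ζ - z x) / 2) ∂μ)
      (comap Complex.im atBot) (𝓝 ((4 * Real.pi : ℂ)⁻¹ * ∫ x, ω x ∂μ)) := by
  have hlower : (4 * Real.pi * I)⁻¹ * ((∫ x, ω x ∂μ) * I) =
      (4 * Real.pi : ℂ)⁻¹ * ∫ x, ω x ∂μ := by
    field_simp
  have hupper : (4 * Real.pi * I)⁻¹ * ((∫ x, ω x ∂μ) * -I) =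
      -((4 * Real.pi : ℂ)⁻¹ * ∫ x, ω x ∂μ) := by
    rw [mul_neg, mul_neg, hlower]
  rw [← hupper, ← hlower]
  exact ⟨(tendsto_integral_mul_cot hω hz (tendsto_cot_comap_im_atTop.comp
      (tendsto_half_sub_comap_im_atTop hzIm))).const_mul _,
    (tendsto_integral_mul_cot hω hz (tendsto_cot_comap_im_atBot.comp
      (tendsto_half_sub_comap_im_atBot hzIm))).const_mul _⟩

end PeriodicKernel

theorem exists_pos_forall_im_norm_le_of_tendsto {E : Type*} [SeminormedAddCommGroup E]
    {F : ℂ → E} {a : E} (hupper : Tendsto F (comap Complex.im atTop) (𝓝 (-a)))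
    (hlower : Tendsto F (comap Complex.im atBot) (𝓝 a)) (ε : ℝ) (hε : 0 < ε) :
    ∃ T : ℝ, 0 < T ∧ (∀ ζ : ℂ, T ≤ ζ.im → ‖F ζ + a‖ ≤ ε) ∧
      (∀ ζ : ℂ, ζ.im ≤ -T → ‖F ζ - a‖ ≤ ε) := by
  obtain ⟨T₁, -, hT₁⟩ := (atTop_basis.comap Complex.im).eventually_iff.1
    (hupper.eventually (Metric.closedBall_mem_nhds _ hε))
  obtain ⟨T₂, -, hT₂⟩ := (atBot_basis.comap Complex.im).eventually_iff.1
    (hlower.eventually (Metric.closedBall_mem_nhds _ hε))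
  refine ⟨max 1 (max T₁ (-T₂)), by positivity, fun ζ hζ => ?_, fun ζ hζ => ?_⟩
  · have hζ₁ : T₁ ≤ ζ.im := ((le_max_left _ _).trans (le_max_right _ _)).trans hζ
    simpa [dist_eq_norm] using hT₁ hζ₁
  · have hζ₂ : ζ.im ≤ T₂ :=
      neg_le_neg_iff.1 (((le_max_right _ _).trans (le_max_right _ _)).trans (le_neg.2 hζ))
    simpa [dist_eq_norm] using hT₂ hζ₂

/-- If `ω ∈ L¹((−π,π);ℂ)` and `z` is measurable with uniformly bounded
imaginary part, then `BR*(ζ) → ∓(1/(4π))∫ω` as `Im ζ → ±∞`, uniformly in `Re ζ`. -/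
theorem periodicBR_limit_at_infinity
    (ω : ℝ → ℂ) (z : ℝ → ℂ)
    (hω : IntegrableOn ω (Ioo (-Real.pi) Real.pi))
    (hz : Measurable z)
    (hzIm : ∃ B : ℝ, ∀ α ∈ Ioo (-Real.pi) Real.pi, |(z α).im| ≤ B) :
    ∀ ε : ℝ, 0 < ε → ∃ T : ℝ, 0 < T ∧
      (∀ ζ : ℂ, T ≤ ζ.im →
        ‖periodicBR ω z ζ +
          (4 * Real.pi : ℂ)⁻¹ * ∫ α in Ioo (-Real.pi) Real.pi, ω α‖ ≤ ε) ∧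
      (∀ ζ : ℂ, ζ.im ≤ -T →
        ‖periodicBR ω z ζ -
          (4 * Real.pi : ℂ)⁻¹ * ∫ α in Ioo (-Real.pi) Real.pi, ω α‖ ≤ ε) := by
  obtain ⟨B, hB⟩ := hzIm
  obtain ⟨hupper, hlower⟩ := periodicBR_limit_at_infinity_general hω hz.aemeasurable
    (ae_restrict_of_forall_mem measurableSet_Ioo hB)
  exact exists_pos_forall_im_norm_le_of_tendsto hupper hlower
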